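/- A signature function σ on the triples of [n] can be realized as the signature function of a semisimple x-monotone drawing of K_n if and only if σ is admissible, i.e., every 4-tuple a < b < c < d is of one of the ten forms ++++, −−−−, ++−−, −−++, −++−, +−−+, −−−+, +++−, +−−−, −+++ in σ. -/

import Mathlib

/-- `Zval n` is Hill's conjectured value
`Z(n) = (1/4)⌊n/2⌋⌊(n−1)/2⌋⌊(n−2)/2⌋⌊(n−3)/2⌋` for the crossing number of `K n`.
(The product of the four floors is always divisible by 4, so natural division is exact.) -/
def Zval (n : ℕ) : ℕ :=
  n / 2 * ((n - 1) / 2) * ((n - 2) / 2) * ((n - 3) / 2) / 4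

/-- An x-monotone drawing of the complete graph `K n`: vertices `v i = (x i, 0)` with
`x` strictly increasing, and for each pair `i < j` a continuous function `e i j` on
`[x i, x j]` vanishing at the endpoints, whose graph is the arc of the edge `{i, j}`.
Edges avoid the intermediate vertices, any two distinct edges meet in finitely many
interior parameters, and at each such common point the difference changes sign
(a proper crossing). -/
structure XMonotoneDrawing (n : ℕ) where
  x : Fin n → ℝ
  x_strictMono : StrictMono x
  e : Fin n → Fin n → ℝ → ℝ
  cont : ∀ i j : Fin n, i < j → ContinuousOn (e i j) (Set.Icc (x i) (x j))
  end_left : ∀ i j : Fin n, i < j → e i j (x i) = 0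
  end_right : ∀ i j : Fin n, i < j → e i j (x j) = 0
  avoid_vertex : ∀ i m j : Fin n, i < m → m < j → e i j (x m) ≠ 0
  cross_finite : ∀ i j k l : Fin n, i < j → k < l → (i, j) ≠ (k, l) →
    {t : ℝ | max (x i) (x k) < t ∧ t < min (x j) (x l) ∧ e i j t = e k l t}.Finite
  sign_change : ∀ i j k l : Fin n, i < j → k < l → (i, j) ≠ (k, l) →
    ∀ t : ℝ, max (x i) (x k) < t → t < min (x j) (x l) → e i j t = e k l t →
      ∃ ε > (0 : ℝ), ∀ s : ℝ, max (x i) (x k) < s → t - ε < s → s < t →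
        ∀ u : ℝ, u < min (x j) (x l) → t < u → u < t + ε →
          (e i j s - e k l s) * (e i j u - e k l u) < 0

namespace XMonotoneDrawing

variable {n : ℕ}

/-- The set of parameters at which the edges `{i,j}` and `{k,l}` cross
(both edges are parametrized over the `x`-axis). -/
def crossSet (D : XMonotoneDrawing n) (i j k l : Fin n) : Set ℝ :=
  {t : ℝ | max (D.x i) (D.x k) < t ∧ t < min (D.x j) (D.x l) ∧ D.e i j t = D.e k l t}

/-- The number of crossings between the edges `{i,j}` and `{k,l}`. -/
noncomputable def crossCount (D : XMonotoneDrawing n) (i j k l : Fin n) : ℕ :=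
  (D.crossSet i j k l).ncard

/-- Two edges `{i,j}` and `{k,l}` are adjacent if they share an endpoint index. -/
def Adj (i j k l : Fin n) : Prop := i = k ∨ i = l ∨ j = k ∨ j = l

/-- A drawing is semisimple if no two adjacent edges cross. -/
def Semisimple (D : XMonotoneDrawing n) : Prop :=
  ∀ i j k l : Fin n, i < j → k < l → (i, j) ≠ (k, l) → Adj i j k l →
    D.crossCount i j k l = 0

/-- A drawing is weakly semisimple if every two adjacent edges cross an even
number of times. -/
def WeaklySemisimple (D : XMonotoneDrawing n) : Prop :=
  ∀ i j k l : Fin n, i < j → k < l → (i, j) ≠ (k, l) → Adj i j k l →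
    Even (D.crossCount i j k l)

/-- A drawing is simple if no two adjacent edges cross and every two non-adjacent
edges cross at most once. -/
def Simple (D : XMonotoneDrawing n) : Prop :=
  ∀ i j k l : Fin n, i < j → k < l → (i, j) ≠ (k, l) →
    (Adj i j k l → D.crossCount i j k l = 0) ∧
    (¬ Adj i j k l → D.crossCount i j k l ≤ 1)

/-- `cr D`: the total number of crossings of `D`. (Each unordered pair of distinct
edges is counted twice in the sum, whence the division by 2; `crossCount` is
symmetric in the two edges.) -/
noncomputable def cr (D : XMonotoneDrawing n) : ℕ :=
  (∑ p : (Fin n × Fin n) × (Fin n × Fin n),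
      if p.1.1 < p.1.2 ∧ p.2.1 < p.2.2 ∧ p.1 ≠ p.2 then
        D.crossCount p.1.1 p.1.2 p.2.1 p.2.2
      else 0) / 2

/-- `ocr D`: the number of unordered pairs of edges of `D` crossing an odd number
of times. (Each unordered pair appears twice as an ordered pair.) -/
noncomputable def ocr (D : XMonotoneDrawing n) : ℕ :=
  {p : (Fin n × Fin n) × (Fin n × Fin n) |
    p.1.1 < p.1.2 ∧ p.2.1 < p.2.2 ∧ p.1 ≠ p.2 ∧
      Odd (D.crossCount p.1.1 p.1.2 p.2.1 p.2.2)}.ncard / 2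

/-- The signature of the triple `i < j < k`: `true` (i.e. `+`) if the vertex `v j`
lies below the edge `{i, k}`, i.e. `e i k (x j) > 0`, and `false` (i.e. `−`) otherwise. -/
noncomputable def sig (D : XMonotoneDrawing n) (i j k : Fin n) : Bool :=
  if 0 < D.e i k (D.x j) then true else false

/-- `D` realizes the signature function `σ` if `σ_D` and `σ` agree on all
increasing triples. -/
def Realizes (D : XMonotoneDrawing n) (σ : Fin n → Fin n → Fin n → Bool) : Prop :=
  ∀ i j k : Fin n, i < j → j < k → D.sig i j k = σ i j k

/-- A drawing is pseudolinear if its edges extend to continuous curves over all of `ℝ`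
that avoid all vertices other than their endpoints and such that any two of these
extended curves cross exactly once (the crossing being a sign change of the difference). -/
def Pseudolinear (D : XMonotoneDrawing n) : Prop :=
  ∃ p : Fin n → Fin n → ℝ → ℝ,
    (∀ i j : Fin n, i < j → Continuous (p i j)) ∧
    (∀ i j : Fin n, i < j → ∀ t ∈ Set.Icc (D.x i) (D.x j), p i j t = D.e i j t) ∧
    (∀ i j m : Fin n, i < j → m ≠ i → m ≠ j → p i j (D.x m) ≠ 0) ∧
    (∀ i j k l : Fin n, i < j → k < l → (i, j) ≠ (k, l) →
      ∃ t : ℝ, p i j t = p k l t ∧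
        ∀ s u : ℝ, s < t → t < u →
          (p i j s - p k l s) * (p i j u - p k l u) < 0)

/-- The arc of the edge `{i, j}` as a subset of the plane `ℝ × ℝ`. -/
def edgeArc (D : XMonotoneDrawing n) (i j : Fin n) : Set (ℝ × ℝ) :=
  {q : ℝ × ℝ | D.x i ≤ q.1 ∧ q.1 ≤ D.x j ∧ q.2 = D.e i j q.1}

/-- The union of all edge arcs of the drawing. -/
def arcUnion (D : XMonotoneDrawing n) : Set (ℝ × ℝ) :=
  ⋃ i : Fin n, ⋃ j : Fin n, ⋃ (_ : i < j), D.edgeArc i j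

end XMonotoneDrawing

namespace Sig

variable {n : ℕ}

/-- With respect to a signature function `σ`, the vertex `m ∉ {i, j}` is on the left of
the directed edge `(i, j)` (where `i < j`). -/
def LeftOf (σ : Fin n → Fin n → Fin n → Bool) (i j m : Fin n) : Prop :=
  (i < m ∧ m < j ∧ σ i m j = false) ∨ (m < i ∧ σ m i j = true) ∨ (j < m ∧ σ i j m = true)

/-- The number of vertices on the left of the directed edge `(i, j)`. -/
noncomputable def leftCount (σ : Fin n → Fin n → Fin n → Bool) (i j : Fin n) : ℕ :=
  {m : Fin n | LeftOf σ i j m}.ncard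

/-- The edge `{i, j}` (with `i < j`) is a `k`-edge of `σ` if `min(ℓ, n − 2 − ℓ) = k`,
where `ℓ` is the number of vertices on its left. -/
def IsKEdge (σ : Fin n → Fin n → Fin n → Bool) (k : ℕ) (i j : Fin n) : Prop :=
  min (leftCount σ i j) (n - 2 - leftCount σ i j) = k

/-- `Ek σ k`: the number of `k`-edges of `σ`. -/
noncomputable def Ek (σ : Fin n → Fin n → Fin n → Bool) (k : ℕ) : ℕ :=
  {p : Fin n × Fin n | p.1 < p.2 ∧ IsKEdge σ k p.1 p.2}.ncard

/-- `Ele σ k = E_{≤k}(σ)`: the number of `≤k`-edges of `σ`. -/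
noncomputable def Ele (σ : Fin n → Fin n → Fin n → Bool) (k : ℕ) : ℕ :=
  ∑ i ∈ Finset.range (k + 1), Ek σ i

/-- `Elele σ k = E_{≤≤k}(σ) = Σ_{j=0}^{k} E_{≤j}(σ)`. -/
noncomputable def Elele (σ : Fin n → Fin n → Fin n → Bool) (k : ℕ) : ℕ :=
  ∑ j ∈ Finset.range (k + 1), Ele σ j

/-- `E_{≤≤k}` with an integer index, which vanishes for negative `k`. -/
noncomputable def ElelZ (σ : Fin n → Fin n → Fin n → Bool) (k : ℤ) : ℕ :=
  if 0 ≤ k then Elele σ k.toNat else 0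

/-- The left count of the edge `{i, j}` in the drawing restricted to the first
`n − 1` vertices (the last vertex deleted). -/
noncomputable def leftCountRes (σ : Fin n → Fin n → Fin n → Bool) (i j : Fin n) : ℕ :=
  {m : Fin n | LeftOf σ i j m ∧ (m : ℕ) + 1 < n}.ncard

/-- The edge `{i, j}` is a `k`-edge of the restriction of `σ` to the first `n − 1`
vertices (there `min(ℓ', (n−1) − 2 − ℓ') = k`). -/
def IsKEdgeRes (σ : Fin n → Fin n → Fin n → Bool) (k : ℕ) (i j : Fin n) : Prop :=
  min (leftCountRes σ i j) (n - 3 - leftCountRes σ i j) = k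

/-- The edge `{i, j}` is a `(D,D')`-invariant `≤k`-edge: it avoids the last vertex and
is an `m`-edge with `m ≤ k` both in `σ` and in the restriction of `σ` to the first
`n − 1` vertices. -/
def InvariantLeK (σ : Fin n → Fin n → Fin n → Bool) (k : ℕ) (i j : Fin n) : Prop :=
  (j : ℕ) + 1 < n ∧ (∃ m ≤ k, IsKEdge σ m i j) ∧ (∃ m ≤ k, IsKEdgeRes σ m i j)

/-- The ten 4-tuple forms allowed in signature functions of semisimple x-monotone
drawings: `++++, −−−−, ++−−, −−++, −++−, +−−+, −−−+, +++−, +−−−, −+++`. -/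
def AllowedForm (a b c d : Bool) : Prop :=
  (a, b, c, d) ∈ ([(true, true, true, true), (false, false, false, false),
    (true, true, false, false), (false, false, true, true),
    (false, true, true, false), (true, false, false, true),
    (false, false, false, true), (true, true, true, false),
    (true, false, false, false), (false, true, true, true)] :
      List (Bool × Bool × Bool × Bool))

/-- A signature function is admissible if every increasing 4-tuple is of one of the
ten allowed forms. -/
def Admissible (σ : Fin n → Fin n → Fin n → Bool) : Prop :=
  ∀ a b c d : Fin n, a < b → b < c → c < d →
    AllowedForm (σ a b c) (σ a b d) (σ a c d) (σ b c d)

/-- The six convex forms: `++++, −−−−, ++−−, −−++, −++−, +−−+`. -/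
def ConvexForm (a b c d : Bool) : Prop :=
  (a, b, c, d) ∈ ([(true, true, true, true), (false, false, false, false),
    (true, true, false, false), (false, false, true, true),
    (false, true, true, false), (true, false, false, true)] :
      List (Bool × Bool × Bool × Bool))

/-- The 4-tuple `a < b < c < d` is convex in `σ`. -/
def Convex4 (σ : Fin n → Fin n → Fin n → Bool) (a b c d : Fin n) : Prop :=
  ConvexForm (σ a b c) (σ a b d) (σ a c d) (σ b c d)

/-- The eight 4-tuple forms of pseudolinear x-monotone drawings (the sign-monotone
sequences): `++++, +++−, ++−−, +−−−, −−−−, −−−+, −−++, −+++`. -/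
def PLForm (a b c d : Bool) : Prop :=
  (a, b, c, d) ∈ ([(true, true, true, true), (true, true, true, false),
    (true, true, false, false), (true, false, false, false),
    (false, false, false, false), (false, false, false, true),
    (false, false, true, true), (false, true, true, true)] :
      List (Bool × Bool × Bool × Bool))

/-- The relation `j ⋖ k` on `{j : i < j}`: `j ⋖ k` iff (`j < k` and `σ i j k = +`)
or (`k < j` and `σ i k j = −`). -/
def Below (σ : Fin n → Fin n → Fin n → Bool) (i j k : Fin n) : Prop :=
  (j < k ∧ σ i j k = true) ∨ (k < j ∧ σ i k j = false)

end Sig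

namespace Sig

/-- A form is allowed iff both the first three and the last three signs avoid the
alternating patterns `+−+` and `−+−`. -/
theorem allowedForm_iff (a b c d : Bool) :
    AllowedForm a b c d ↔ (a = c → b = a) ∧ (b = d → c = b) := by
  unfold AllowedForm
  revert a b c d
  decide

end Sig

/-- A continuous function without zeros on a closed interval has the same sign at both ends. -/
theorem pos_iff_pos_of_ne_zero_on_Icc {f : ℝ → ℝ} {p q : ℝ} (hpq : p ≤ q)
    (hf : ContinuousOn f (Set.Icc p q)) (h0 : ∀ t ∈ Set.Icc p q, f t ≠ 0) :
    0 < f p ↔ 0 < f q := by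
  have hp := h0 p ⟨le_rfl, hpq⟩
  have hq := h0 q ⟨hpq, le_rfl⟩
  constructor
  · intro h
    by_contra hn
    obtain ⟨t, ht, hz⟩ := intermediate_value_Icc' hpq hf ⟨not_lt.1 hn, h.le⟩
    exact h0 t ht hz
  · intro h
    by_contra hn
    obtain ⟨t, ht, hz⟩ := intermediate_value_Icc hpq hf ⟨not_lt.1 hn, h.le⟩
    exact h0 t ht hz

namespace XMonotoneDrawing

variable {n : ℕ}

theorem Semisimple.ne {D : XMonotoneDrawing n} (hD : D.Semisimple) {i j k l : Fin n}
    (hij : i < j) (hkl : k < l) (hne : (i, j) ≠ (k, l)) (hadj : Adj i j k l) {t : ℝ}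
    (h₁ : max (D.x i) (D.x k) < t) (h₂ : t < min (D.x j) (D.x l)) :
    D.e i j t ≠ D.e k l t := by
  intro h
  have hfin : (D.crossSet i j k l).Finite := D.cross_finite i j k l hij hkl hne
  have hempty := (Set.ncard_eq_zero hfin).1 (hD i j k l hij hkl hne hadj)
  have : t ∈ D.crossSet i j k l := ⟨h₁, h₂, h⟩
  simp [hempty] at this

theorem sig_eq_true_iff (D : XMonotoneDrawing n) (i j k : Fin n) :
    D.sig i j k = true ↔ 0 < D.e i k (D.x j) := by
  simp [sig]

/-- Two edges with common left endpoint keep their vertical order. -/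
theorem Semisimple.sig_iff_left {D : XMonotoneDrawing n} (hD : D.Semisimple) {a b c : Fin n}
    (hab : a < b) (hbc : b < c) {t : ℝ} (h₁ : D.x a < t) (h₂ : t < D.x b) :
    D.sig a b c = true ↔ D.e a b t < D.e a c t := by
  have hxbc := D.x_strictMono hbc
  have hac := hab.trans hbc
  have key := pos_iff_pos_of_ne_zero_on_Icc (f := fun s => D.e a c s - D.e a b s) h₂.le
    (((D.cont a c hac).mono (Set.Icc_subset_Icc h₁.le hxbc.le)).sub
      ((D.cont a b hab).mono (Set.Icc_subset_Icc h₁.le le_rfl))) (by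
      rintro s ⟨hs₁, hs₂⟩
      rcases hs₂.eq_or_lt with rfl | hs₂
      · simpa [D.end_right a b hab] using D.avoid_vertex a b c hab hbc
      · refine sub_ne_zero.2 (hD.ne hac hab ?_ (Or.inl rfl) ?_ ?_)
        · simp [hbc.ne']
        · simpa using h₁.trans_le hs₁
        · exact lt_min (hs₂.trans hxbc) hs₂)
  rw [sig_eq_true_iff, ← sub_pos (a := D.e a c t), key, D.end_right a b hab, sub_zero]

/-- Two edges with common right endpoint keep their vertical order. -/
theorem Semisimple.sig_iff_right {D : XMonotoneDrawing n} (hD : D.Semisimple) {a b c : Fin n}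
    (hab : a < b) (hbc : b < c) {t : ℝ} (h₁ : D.x b < t) (h₂ : t < D.x c) :
    D.sig a b c = true ↔ D.e b c t < D.e a c t := by
  have hxab := D.x_strictMono hab
  have hac := hab.trans hbc
  have key := pos_iff_pos_of_ne_zero_on_Icc (f := fun s => D.e a c s - D.e b c s) h₁.le
    (((D.cont a c hac).mono (Set.Icc_subset_Icc hxab.le h₂.le)).sub
      ((D.cont b c hbc).mono (Set.Icc_subset_Icc le_rfl h₂.le))) (by
      rintro s ⟨hs₁, hs₂⟩
      rcases hs₁.eq_or_lt with rfl | hs₁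
      · simpa [D.end_left b c hbc] using D.avoid_vertex a b c hab hbc
      · refine sub_ne_zero.2 (hD.ne hac hbc ?_ (Or.inr (Or.inr (Or.inr rfl))) ?_ ?_)
        · simp [hab.ne]
        · exact max_lt (hxab.trans hs₁) hs₁
        · simpa using hs₂.trans_lt h₂)
  rw [sig_eq_true_iff, ← sub_pos (a := D.e a c t), ← key, D.end_left b c hbc, sub_zero]

theorem Semisimple.admissible {D : XMonotoneDrawing n} (hD : D.Semisimple)
    {σ : Fin n → Fin n → Fin n → Bool} (hσ : D.Realizes σ) : Sig.Admissible σ := by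
  intro a b c d hab hbc hcd
  have hac := hab.trans hbc
  have hbd := hbc.trans hcd
  rw [← hσ a b c hab hbc, ← hσ a b d hab hbd, ← hσ a c d hac hcd, ← hσ b c d hbc hcd,
    Sig.allowedForm_iff]
  obtain ⟨t, ht₁, ht₂⟩ := exists_between (D.x_strictMono hab)
  obtain ⟨u, hu₁, hu₂⟩ := exists_between (D.x_strictMono hcd)
  have hxbc := D.x_strictMono hbc
  have l₁ := hD.sig_iff_left hab hbc ht₁ ht₂
  have l₂ := hD.sig_iff_left hab hbd ht₁ ht₂
  have l₃ := hD.sig_iff_left hac hcd ht₁ (ht₂.trans hxbc)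
  have r₁ := hD.sig_iff_right hab hbd (hxbc.trans hu₁) hu₂
  have r₂ := hD.sig_iff_right hac hcd hu₁ hu₂
  have r₃ := hD.sig_iff_right hbc hcd hu₁ hu₂
  constructor
  · intro h
    cases h₁ : D.sig a b c <;> cases h₂ : D.sig a b d <;> cases h₃ : D.sig a c d <;>
      simp_all <;> linarith
  · intro h
    cases h₁ : D.sig a b d <;> cases h₂ : D.sig a c d <;> cases h₃ : D.sig b c d <;>
      simp_all <;> linarith

end XMonotoneDrawing

section PiecewiseLinear

/-- The function that interpolates the values `g 0, …, g (N - 1)` at the integers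
`0, …, N - 1` linearly. -/
noncomputable def linearInterp (N : ℕ) (g : ℕ → ℝ) (t : ℝ) : ℝ :=
  ∑ m ∈ Finset.range N, g m * max 0 (1 - |t - m|)

theorem continuous_linearInterp (N : ℕ) (g : ℕ → ℝ) : Continuous (linearInterp N g) := by
  unfold linearInterp
  fun_prop

theorem linearInterp_sub (N : ℕ) (g h : ℕ → ℝ) (t : ℝ) :
    linearInterp N (fun m => g m - h m) t = linearInterp N g t - linearInterp N h t := by
  simp [linearInterp, sub_mul, Finset.sum_sub_distrib]

theorem linearInterp_eq {N m : ℕ} (hm : m + 1 < N) (g : ℕ → ℝ) {t : ℝ}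
    (h₁ : (m : ℝ) ≤ t) (h₂ : t ≤ m + 1) :
    linearInterp N g t = g m + (t - m) * (g (m + 1) - g m) := by
  unfold linearInterp
  rw [← Finset.sum_subset (s₁ := {m, m + 1})]
  · rw [Finset.sum_pair (by omega), abs_of_nonneg (by linarith), max_eq_right (by linarith),
      abs_of_nonpos (by push_cast; linarith), max_eq_right (by push_cast; linarith)]
    push_cast
    ring
  · intro k hk
    simp only [Finset.mem_insert, Finset.mem_singleton] at hk
    simp only [Finset.mem_range]
    omega
  · intro k _ hk
    simp only [Finset.mem_insert, Finset.mem_singleton, not_or] at hk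
    have : 1 ≤ |t - k| := by
      rcases lt_or_ge k m with h | h
      · have : (k : ℝ) + 1 ≤ m := by exact_mod_cast h
        exact le_abs.2 (Or.inl (by linarith))
      · have : (m : ℝ) + 2 ≤ k := by
          have : m + 2 ≤ k := by omega
          exact_mod_cast this
        exact le_abs.2 (Or.inr (by linarith))
    rw [max_eq_left (by linarith), mul_zero]

theorem linearInterp_natCast {N m : ℕ} (hm : m < N) (g : ℕ → ℝ) :
    linearInterp N g m = g m := by
  unfold linearInterp
  rw [Finset.sum_eq_single m]
  · simp
  · intro k _ hk
    have : 1 ≤ |(m : ℝ) - k| := by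
      have : (1 : ℤ) ≤ |(m : ℤ) - k| := Int.one_le_abs (by omega)
      exact_mod_cast this
    rw [max_eq_left (by linarith), mul_zero]
  · simp [hm]

variable {N A B : ℕ} {d : ℕ → ℝ}

/-- A zero of an interpolating function lies strictly between two consecutive integers at
which the values have opposite signs. -/
theorem exists_mul_neg_of_linearInterp_eq_zero (hB : B < N)
    (hd : ∀ m, A < m → m < B → d m ≠ 0)
    (hdd : ∀ m, A ≤ m → m < B → d m = 0 → d (m + 1) ≠ 0)
    {t : ℝ} (h₁ : (A : ℝ) < t) (h₂ : t < B) (h : linearInterp N d t = 0) :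
    ∃ m, A ≤ m ∧ m < B ∧ (m : ℝ) < t ∧ t < m + 1 ∧ d m * d (m + 1) < 0 := by
  have ht0 : 0 ≤ t := (Nat.cast_nonneg A).trans h₁.le
  have hAm : A ≤ ⌊t⌋₊ := Nat.le_floor h₁.le
  have hmB : ⌊t⌋₊ < B := (Nat.floor_lt ht0).2 h₂
  have hle := Nat.floor_le ht0
  have hlt := Nat.lt_floor_add_one t
  generalize ⌊t⌋₊ = m at *
  have hmt : (m : ℝ) < t := by
    refine hle.lt_of_ne fun hEq => ?_
    rw [← hEq, linearInterp_natCast (by omega)] at h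
    exact hd m (by rw [← hEq] at h₁; exact_mod_cast h₁) hmB h
  refine ⟨m, hAm, hmB, hmt, hlt, ?_⟩
  rw [linearInterp_eq (by omega) d hle hlt.le] at h
  have h0 : d m ≠ 0 := by
    intro h0
    have h0' := hdd m hAm hmB h0
    rw [h0] at h
    have : (t - m) * d (m + 1) = 0 := by linarith
    rcases mul_eq_zero.1 this with h' | h'
    · linarith
    · exact h0' h'
  have h3 : (t - m) * (d m * d (m + 1)) = - ((1 - (t - m)) * (d m * d m)) := by
    linear_combination d m * h
  have h4 : 0 < (1 - (t - m)) * (d m * d m) :=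
    mul_pos (by linarith) (mul_self_pos.2 h0)
  by_contra hcon
  have := mul_nonneg (sub_nonneg.2 hle) (not_lt.1 hcon)
  linarith

theorem finite_zeros_linearInterp (hB : B < N)
    (hd : ∀ m, A < m → m < B → d m ≠ 0)
    (hdd : ∀ m, A ≤ m → m < B → d m = 0 → d (m + 1) ≠ 0) :
    {t : ℝ | (A : ℝ) < t ∧ t < B ∧ linearInterp N d t = 0}.Finite := by
  refine ((Finset.range B).finite_toSet.image
    fun m : ℕ => (m : ℝ) + d m / (d m - d (m + 1))).subset ?_
  rintro t ⟨h₁, h₂, h⟩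
  obtain ⟨m, -, hmB, hm₁, hm₂, hneg⟩ :=
    exists_mul_neg_of_linearInterp_eq_zero hB hd hdd h₁ h₂ h
  refine ⟨m, by simpa using hmB, ?_⟩
  rw [linearInterp_eq (by omega) d hm₁.le hm₂.le] at h
  have hne : d m - d (m + 1) ≠ 0 := by
    intro h0
    rw [sub_eq_zero.1 h0] at hneg
    exact absurd hneg (not_lt.2 (mul_self_nonneg _))
  field_simp
  linear_combination h

theorem sign_change_linearInterp (hB : B < N)
    (hd : ∀ m, A < m → m < B → d m ≠ 0)
    (hdd : ∀ m, A ≤ m → m < B → d m = 0 → d (m + 1) ≠ 0)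
    {t : ℝ} (h₁ : (A : ℝ) < t) (h₂ : t < B) (h : linearInterp N d t = 0) :
    ∃ ε > (0 : ℝ), ∀ s, t - ε < s → s < t → ∀ u, t < u → u < t + ε →
      linearInterp N d s * linearInterp N d u < 0 := by
  obtain ⟨m, -, hmB, hm₁, hm₂, hneg⟩ :=
    exists_mul_neg_of_linearInterp_eq_zero hB hd hdd h₁ h₂ h
  refine ⟨min (t - m) (m + 1 - t), lt_min (by linarith) (by linarith), ?_⟩
  intro s hs hst u htu hu
  have e₁ := min_le_left (t - m) (m + 1 - t)
  have e₂ := min_le_right (t - m) (m + 1 - t)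
  have hmN : m + 1 < N := by omega
  rw [linearInterp_eq hmN d hm₁.le hm₂.le] at h
  rw [linearInterp_eq hmN d (by linarith) (by linarith),
    linearInterp_eq hmN d (by linarith) (by linarith)]
  have hne : d (m + 1) - d m ≠ 0 := by
    intro h0
    rw [sub_eq_zero.1 h0] at hneg
    exact absurd hneg (not_lt.2 (mul_self_nonneg _))
  have es : d m + (s - m) * (d (m + 1) - d m) = (s - t) * (d (m + 1) - d m) := by
    linear_combination h
  have eu : d m + (u - m) * (d (m + 1) - d m) = (u - t) * (d (m + 1) - d m) := by
    linear_combination h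
  rw [es, eu]
  have := mul_pos (mul_pos (sub_pos.2 hst) (sub_pos.2 htu)) (mul_self_pos.2 hne)
  linarith

end PiecewiseLinear

section Heights

/-- Admissibility for signature functions on natural numbers below `n`, with the allowed
forms spelled out as transitivity conditions. -/
def AdmissibleBelow (n : ℕ) (τ : ℕ → ℕ → ℕ → Bool) : Prop :=
  ∀ a b c d, a < b → b < c → c < d → d < n →
    (τ a b c = τ a c d → τ a b d = τ a b c) ∧ (τ a b d = τ b c d → τ a c d = τ a b d)

/-- The edge `{i, j}` starts below the edge `{i, k}` at their common left endpoint `i`. -/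
def StartsBelow (τ : ℕ → ℕ → ℕ → Bool) (i j k : ℕ) : Prop :=
  (j < k ∧ τ i j k = true) ∨ (k < j ∧ τ i k j = false)

open scoped Classical in
/-- The normalized rank of `{i, j}` among the edges with left endpoint `i`. -/
noncomputable def startRank (n : ℕ) (τ : ℕ → ℕ → ℕ → Bool) (i j : ℕ) : ℝ :=
  ((Finset.range n).filter fun k => i < k ∧ StartsBelow τ i k j).card / (n + 1)

/-- The side of the vertex `m` on which the edge `{i, j}` passes (`0` if `m ≤ i`). -/
noncomputable def side (τ : ℕ → ℕ → ℕ → Bool) (i j m : ℕ) : ℝ :=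
  if i < m then (if τ i m j = true then 1 else -1) else 0

/-- A height for the edge `{i, j}` above the vertex `m`; it orders the edges
lexicographically by their sides at `m, m - 1, …` and finally by their rank at the left
endpoint. -/
noncomputable def height (n : ℕ) (τ : ℕ → ℕ → ℕ → Bool) (i j : ℕ) : ℕ → ℝ
  | 0 => startRank n τ i j
  | m + 1 => side τ i j (m + 1) + height n τ i j m / 3

/-- The height of the drawn edge `{i, j}` at the vertex `m`. -/
noncomputable def edgeHeight (n : ℕ) (τ : ℕ → ℕ → ℕ → Bool) (i j m : ℕ) : ℝ :=
  if i < m ∧ m < j then height n τ i j m else 0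

variable {n : ℕ} {τ : ℕ → ℕ → ℕ → Bool}

theorem StartsBelow.trans (hτ : AdmissibleBelow n τ) {i j k l : ℕ} (hij : i < j) (hik : i < k)
    (hil : i < l) (hj : j < n) (hk : k < n) (hl : l < n) (h₁ : StartsBelow τ i j k)
    (h₂ : StartsBelow τ i k l) : StartsBelow τ i j l := by
  have hT : ∀ b c d, i < b → b < c → c < d → d < n → τ i b c = τ i c d → τ i b d = τ i b c :=
    fun b c d h₁ h₂ h₃ h₄ => (hτ i b c d h₁ h₂ h₃ h₄).1
  unfold StartsBelow at *
  rcases h₁ with ⟨a₁, b₁⟩ | ⟨a₁, b₁⟩ <;> rcases h₂ with ⟨a₂, b₂⟩ | ⟨a₂, b₂⟩ <;>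
    rcases lt_trichotomy j l with h | h | h <;> grind

theorem not_startsBelow_self (i j : ℕ) : ¬ StartsBelow τ i j j := by
  simp [StartsBelow]

theorem startRank_lt (hτ : AdmissibleBelow n τ) {i j k : ℕ} (hij : i < j) (hik : i < k)
    (hj : j < n) (hk : k < n) (h : StartsBelow τ i j k) :
    startRank n τ i j < startRank n τ i k := by
  classical
  unfold startRank
  have hlt : ((Finset.range n).filter fun l => i < l ∧ StartsBelow τ i l j).card <
      ((Finset.range n).filter fun l => i < l ∧ StartsBelow τ i l k).card := by
    apply Finset.card_lt_card
    rw [Finset.ssubset_iff_of_subset]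
    · exact ⟨j, by simp [hj, hij, h], by simp [not_startsBelow_self]⟩
    · intro l
      simp only [Finset.mem_filter, Finset.mem_range]
      rintro ⟨hl, hil, hlj⟩
      exact ⟨hl, hil, hlj.trans hτ hil hij hik hl hj hk h⟩
  gcongr

theorem abs_startRank_lt (n : ℕ) (τ : ℕ → ℕ → ℕ → Bool) (i j : ℕ) :
    |startRank n τ i j| < 3 / 2 := by
  classical
  unfold startRank
  have h := (Finset.card_filter_le (Finset.range n) fun k => i < k ∧ StartsBelow τ i k j)
  rw [Finset.card_range] at h
  have h' : (((Finset.range n).filter fun k => i < k ∧ StartsBelow τ i k j).card : ℝ) ≤ n := by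
    exact_mod_cast h
  rw [abs_of_nonneg (by positivity), div_lt_iff₀ (by positivity)]
  linarith [(Nat.cast_nonneg n : (0 : ℝ) ≤ n)]

theorem abs_height_lt (n : ℕ) (τ : ℕ → ℕ → ℕ → Bool) (i j m : ℕ) :
    |height n τ i j m| < 3 / 2 := by
  induction m with
  | zero => exact abs_startRank_lt n τ i j
  | succ m ih =>
    rw [abs_lt] at ih ⊢
    unfold height side
    split_ifs <;> constructor <;> linarith

theorem height_pos_iff {i j m : ℕ} (him : i < m) :
    (0 < height n τ i j m ↔ τ i m j = true) ∧ height n τ i j m ≠ 0 := by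
  obtain ⟨m, rfl⟩ : ∃ k, m = k + 1 := ⟨m - 1, by omega⟩
  have h := abs_lt.1 (abs_height_lt n τ i j m)
  unfold height side
  rw [if_pos him]
  split_ifs with h'
  · exact ⟨⟨fun _ => h', fun _ => by linarith⟩, by intro h0; linarith⟩
  · exact ⟨⟨fun h0 => by linarith, fun h0 => absurd h0 h'⟩, by intro h0; linarith⟩

/-- Edges with common left endpoint `i` are ordered consistently at all vertices. -/
theorem height_lt_of_startsBelow (hτ : AdmissibleBelow n τ) {i j k : ℕ} (hij : i < j)
    (hik : i < k) (hj : j < n) (hk : k < n) (h : StartsBelow τ i j k) {m : ℕ} (hmj : m < j)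
    (hmk : m < k) : height n τ i j m < height n τ i k m := by
  induction m with
  | zero => exact startRank_lt hτ hij hik hj hk h
  | succ m ih =>
    have ih := ih (by omega) (by omega)
    have hbj := abs_lt.1 (abs_height_lt n τ i j m)
    have hbk := abs_lt.1 (abs_height_lt n τ i k m)
    unfold height side
    by_cases him : i < m + 1
    · have hbad : ¬ (τ i (m + 1) j = true ∧ τ i (m + 1) k = false) := by
        rintro ⟨e₁, e₂⟩
        rcases h with ⟨hjk, hs⟩ | ⟨hkj, hs⟩
        · have := (hτ i (m + 1) j k him hmj hjk hk).1
          simp [e₁, e₂, hs] at this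
        · have := (hτ i (m + 1) k j him hmk hkj hj).1
          simp [e₁, e₂, hs] at this
      simp only [him, if_true]
      cases e₁ : τ i (m + 1) j <;> cases e₂ : τ i (m + 1) k <;> simp_all <;> linarith
    · simp only [him, if_false]
      linarith

theorem side_self (τ : ℕ → ℕ → ℕ → Bool) (i j : ℕ) : side τ i j i = 0 := by
  simp [side]

/-- Edges with common right endpoint `j` are ordered consistently at all vertices. -/
theorem height_right (hτ : AdmissibleBelow n τ) {i k j : ℕ} (hik : i < k) (hj : j < n)
    {m : ℕ} (hkm : k ≤ m) (hmj : m < j) :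
    (τ i k j = true → height n τ k j m < height n τ i j m) ∧
      (τ i k j = false → height n τ i j m < height n τ k j m) := by
  induction m, hkm using Nat.le_induction with
  | base =>
    obtain ⟨k, rfl⟩ : ∃ l, k = l + 1 := ⟨k - 1, by omega⟩
    have hbi := abs_lt.1 (abs_height_lt n τ i j k)
    have hbk := abs_lt.1 (abs_height_lt n τ (k + 1) j k)
    unfold height
    rw [side_self]
    unfold side
    rw [if_pos hik]
    constructor <;> intro h <;> simp only [h, if_true, Bool.false_eq_true, if_false] <;> linarith
  | succ m hkm ih =>
    have ih := ih (by omega)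
    have hbi := abs_lt.1 (abs_height_lt n τ i j m)
    have hbk := abs_lt.1 (abs_height_lt n τ k j m)
    have hT := (hτ i k (m + 1) j hik (by omega) hmj hj).2
    unfold height side
    rw [if_pos (show i < m + 1 by omega), if_pos (show k < m + 1 by omega)]
    cases e₁ : τ i k j <;> cases e₂ : τ i (m + 1) j <;> cases e₃ : τ k (m + 1) j <;>
      simp_all <;> linarith

theorem height_ne_of_left_lt {i j k l : ℕ} (hik : i < k) {m : ℕ} (hkm : k ≤ m) :
    height n τ i j m ≠ height n τ k l m := by
  induction m, hkm using Nat.le_induction with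
  | base =>
    obtain ⟨k, rfl⟩ : ∃ l, k = l + 1 := ⟨k - 1, by omega⟩
    have hbi := abs_lt.1 (abs_height_lt n τ i j k)
    have hbk := abs_lt.1 (abs_height_lt n τ (k + 1) l k)
    unfold height
    rw [side_self]
    unfold side
    rw [if_pos hik]
    intro h
    split_ifs at h <;> linarith
  | succ m hkm ih =>
    have hbi := abs_lt.1 (abs_height_lt n τ i j m)
    have hbk := abs_lt.1 (abs_height_lt n τ k l m)
    unfold height side
    rw [if_pos (show i < m + 1 by omega), if_pos (show k < m + 1 by omega)]
    intro h
    split_ifs at h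
    · exact ih (by linarith)
    · linarith
    · linarith
    · exact ih (by linarith)

theorem startsBelow_or {i j k : ℕ} (h : j ≠ k) : StartsBelow τ i j k ∨ StartsBelow τ i k j := by
  unfold StartsBelow
  rcases lt_or_gt_of_ne h with h | h
  · cases τ i j k <;> simp [h]
  · cases τ i k j <;> simp [h]

/-- Distinct edges have distinct heights at every vertex interior to both. -/
theorem height_ne (hτ : AdmissibleBelow n τ) {i j k l m : ℕ} (hj : j < n) (hl : l < n)
    (him : i < m) (hmj : m < j) (hkm : k < m) (hml : m < l) (hne : (i, j) ≠ (k, l)) :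
    height n τ i j m ≠ height n τ k l m := by
  rcases lt_trichotomy i k with h | rfl | h
  · exact height_ne_of_left_lt h hkm.le
  · have hjl : j ≠ l := fun h => hne (by rw [h])
    rcases startsBelow_or (τ := τ) (i := i) hjl with h | h
    · exact (height_lt_of_startsBelow hτ (by omega) (by omega) hj hl h hmj hml).ne
    · exact (height_lt_of_startsBelow hτ (by omega) (by omega) hl hj h hml hmj).ne'
  · exact (height_ne_of_left_lt h him.le).symm

theorem edgeHeight_eq {i j m : ℕ} (h₁ : i < m) (h₂ : m < j) :
    edgeHeight n τ i j m = height n τ i j m := if_pos ⟨h₁, h₂⟩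

theorem edgeHeight_left (i j : ℕ) : edgeHeight n τ i j i = 0 := by simp [edgeHeight]

theorem edgeHeight_right (i j : ℕ) : edgeHeight n τ i j j = 0 := by simp [edgeHeight]

theorem edgeHeight_pos_iff {i j m : ℕ} (h₁ : i < m) (h₂ : m < j) :
    0 < edgeHeight n τ i j m ↔ τ i m j = true := by
  rw [edgeHeight_eq h₁ h₂]
  exact (height_pos_iff h₁).1

theorem edgeHeight_ne_zero {i j m : ℕ} (h₁ : i < m) (h₂ : m < j) :
    edgeHeight n τ i j m ≠ 0 := by
  rw [edgeHeight_eq h₁ h₂]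
  exact (height_pos_iff h₁).2

/-- At a vertex of their common range, distinct edges have equal heights only if the vertex
is a common endpoint. -/
theorem edgeHeight_eq_imp (hτ : AdmissibleBelow n τ) {i j k l m : ℕ} (hj : j < n) (hl : l < n)
    (hne : (i, j) ≠ (k, l)) (hm₁ : max i k ≤ m) (hm₂ : m ≤ min j l) (hlt : max i k < min j l)
    (h : edgeHeight n τ i j m = edgeHeight n τ k l m) : (m = i ∧ m = k) ∨ (m = j ∧ m = l) := by
  by_cases hij : i < m ∧ m < j
  · by_cases hkl : k < m ∧ m < l
    · rw [edgeHeight_eq hij.1 hij.2, edgeHeight_eq hkl.1 hkl.2] at h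
      exact absurd h (height_ne hτ hj hl hij.1 hij.2 hkl.1 hkl.2 hne)
    · rw [show edgeHeight n τ k l m = 0 from if_neg hkl] at h
      exact absurd h (edgeHeight_ne_zero hij.1 hij.2)
  · by_cases hkl : k < m ∧ m < l
    · rw [show edgeHeight n τ i j m = 0 from if_neg hij] at h
      exact absurd h.symm (edgeHeight_ne_zero hkl.1 hkl.2)
    · omega

theorem edgeHeight_le_of_startsBelow (hτ : AdmissibleBelow n τ) {i j k : ℕ} (hij : i < j)
    (hik : i < k) (hj : j < n) (hk : k < n) (h : StartsBelow τ i j k) {m : ℕ} (him : i ≤ m)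
    (hmj : m ≤ j) (hmk : m ≤ k) : edgeHeight n τ i j m ≤ edgeHeight n τ i k m := by
  rcases him.eq_or_lt with rfl | him
  · simp [edgeHeight_left]
  rcases hmj.eq_or_lt with rfl | hmj <;> rcases hmk.eq_or_lt with rfl | hmk
  · rfl
  · rw [edgeHeight_right]
    refine ((edgeHeight_pos_iff him hmk).2 ?_).le
    rcases h with h | h
    · exact h.2
    · omega
  · rw [edgeHeight_right]
    refine not_lt.1 fun h0 => ?_
    have := (edgeHeight_pos_iff him hmj).1 h0
    rcases h with h | h
    · omega
    · simp [this] at h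
  · rw [edgeHeight_eq him hmj, edgeHeight_eq him hmk]
    exact (height_lt_of_startsBelow hτ hij hik hj hk h hmj hmk).le

theorem edgeHeight_right_le (hτ : AdmissibleBelow n τ) {i k j : ℕ} (hik : i < k) (hj : j < n) :
    (∀ m, k ≤ m → m ≤ j → edgeHeight n τ i j m ≤ edgeHeight n τ k j m) ∨
      ∀ m, k ≤ m → m ≤ j → edgeHeight n τ k j m ≤ edgeHeight n τ i j m := by
  cases hs : τ i k j
  · left
    intro m hkm hmj
    rcases hmj.eq_or_lt with rfl | hmj
    · simp [edgeHeight_right]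
    rcases hkm.eq_or_lt with rfl | hkm
    · rw [edgeHeight_left]
      refine not_lt.1 fun h0 => ?_
      simp [(edgeHeight_pos_iff hik hmj).1 h0] at hs
    · rw [edgeHeight_eq (hik.trans hkm) hmj, edgeHeight_eq hkm hmj]
      exact ((height_right hτ hik hj hkm.le hmj).2 hs).le
  · right
    intro m hkm hmj
    rcases hmj.eq_or_lt with rfl | hmj
    · simp [edgeHeight_right]
    rcases hkm.eq_or_lt with rfl | hkm
    · rw [edgeHeight_left]
      exact ((edgeHeight_pos_iff hik hmj).2 hs).le
    · rw [edgeHeight_eq (hik.trans hkm) hmj, edgeHeight_eq hkm hmj]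
      exact ((height_right hτ hik hj hkm.le hmj).1 hs).le

/-- Distinct adjacent edges do not change their vertical order on their common range. -/
theorem edgeHeight_comparable (hτ : AdmissibleBelow n τ) {i j k l : ℕ} (hij : i < j)
    (hkl : k < l) (hj : j < n) (hl : l < n) (hne : (i, j) ≠ (k, l)) (hadj : i = k ∨ j = l) :
    (∀ m, max i k ≤ m → m ≤ min j l → edgeHeight n τ i j m ≤ edgeHeight n τ k l m) ∨
      ∀ m, max i k ≤ m → m ≤ min j l → edgeHeight n τ k l m ≤ edgeHeight n τ i j m := by
  rcases hadj with rfl | rfl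
  · have hjl : j ≠ l := fun h => hne (by rw [h])
    rcases startsBelow_or (τ := τ) (i := i) hjl with h | h
    · exact Or.inl fun m h₁ h₂ =>
        edgeHeight_le_of_startsBelow hτ hij hkl hj hl h (by omega) (by omega) (by omega)
    · exact Or.inr fun m h₁ h₂ =>
        edgeHeight_le_of_startsBelow hτ hkl hij hl hj h (by omega) (by omega) (by omega)
  · rcases lt_trichotomy i k with h | rfl | h
    · exact (edgeHeight_right_le hτ h hj).imp
        (fun H m h₁ h₂ => H m (by omega) (by omega)) fun H m h₁ h₂ => H m (by omega) (by omega)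
    · exact absurd rfl hne
    · exact (edgeHeight_right_le hτ h hj).symm.imp
        (fun H m h₁ h₂ => H m (by omega) (by omega)) fun H m h₁ h₂ => H m (by omega) (by omega)

theorem edgeHeight_sub_ne_zero (hτ : AdmissibleBelow n τ) {i j k l : ℕ} (hj : j < n)
    (hl : l < n) (hne : (i, j) ≠ (k, l)) (m : ℕ) (hm₁ : max i k < m) (hm₂ : m < min j l) :
    edgeHeight n τ i j m - edgeHeight n τ k l m ≠ 0 := fun h => by
  have := edgeHeight_eq_imp hτ hj hl hne hm₁.le hm₂.le (by omega) (sub_eq_zero.1 h)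
  omega

theorem edgeHeight_sub_succ_ne_zero (hτ : AdmissibleBelow n τ) {i j k l : ℕ} (hj : j < n)
    (hl : l < n) (hne : (i, j) ≠ (k, l)) (m : ℕ) (hm₁ : max i k ≤ m) (hm₂ : m < min j l)
    (h : edgeHeight n τ i j m - edgeHeight n τ k l m = 0) :
    edgeHeight n τ i j (m + 1) - edgeHeight n τ k l (m + 1) ≠ 0 := fun h' => by
  have h₁ := edgeHeight_eq_imp hτ hj hl hne hm₁ hm₂.le (by omega) (sub_eq_zero.1 h)
  have h₂ := edgeHeight_eq_imp hτ hj hl hne (m := m + 1) (by omega) (by omega) (by omega)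
    (sub_eq_zero.1 h')
  have : ¬ (i = k ∧ j = l) := fun e => hne (by rw [e.1, e.2])
  omega

end Heights

namespace XMonotoneDrawing

variable {n : ℕ} {τ : ℕ → ℕ → ℕ → Bool}

/-- The piecewise linear drawing through the heights `edgeHeight n τ`. -/
noncomputable def ofAdmissible (hτ : AdmissibleBelow n τ) : XMonotoneDrawing n where
  x i := ((i : ℕ) : ℝ)
  x_strictMono i j h := Nat.cast_lt.2 h
  e i j := linearInterp n (edgeHeight n τ i j)
  cont i j _ := (continuous_linearInterp _ _).continuousOn
  end_left i j _ := by rw [linearInterp_natCast i.2, edgeHeight_left]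
  end_right i j _ := by rw [linearInterp_natCast j.2, edgeHeight_right]
  avoid_vertex i m j h₁ h₂ := by
    rw [linearInterp_natCast m.2]
    exact edgeHeight_ne_zero h₁ h₂
  cross_finite i j k l hij hkl hne := by
    have hne' : ((i : ℕ), (j : ℕ)) ≠ ((k : ℕ), (l : ℕ)) := by simpa [Fin.ext_iff] using hne
    have := finite_zeros_linearInterp (N := n) (by omega)
      (edgeHeight_sub_ne_zero hτ j.2 l.2 hne') (edgeHeight_sub_succ_ne_zero hτ j.2 l.2 hne')
    simpa [linearInterp_sub, sub_eq_zero] using this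
  sign_change i j k l hij hkl hne t h₁ h₂ h := by
    have hne' : ((i : ℕ), (j : ℕ)) ≠ ((k : ℕ), (l : ℕ)) := by simpa [Fin.ext_iff] using hne
    obtain ⟨ε, hε, H⟩ := sign_change_linearInterp (N := n) (t := t) (by omega)
      (edgeHeight_sub_ne_zero hτ j.2 l.2 hne') (edgeHeight_sub_succ_ne_zero hτ j.2 l.2 hne')
      (by exact_mod_cast h₁) (by exact_mod_cast h₂) (by rw [linearInterp_sub, h, sub_self])
    refine ⟨ε, hε, fun s _ hs hst u _ htu hu => ?_⟩
    simpa only [linearInterp_sub] using H s hs hst u htu hu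

theorem semisimple_ofAdmissible (hτ : AdmissibleBelow n τ) : (ofAdmissible hτ).Semisimple := by
  intro i j k l hij hkl hne hadj
  have hne' : ((i : ℕ), (j : ℕ)) ≠ ((k : ℕ), (l : ℕ)) := by simpa [Fin.ext_iff] using hne
  suffices (ofAdmissible hτ).crossSet i j k l = ∅ by rw [crossCount, this, Set.ncard_empty]
  refine Set.eq_empty_of_forall_notMem fun t ⟨h₁, h₂, h⟩ => ?_
  change max (((i : ℕ) : ℝ)) (((k : ℕ) : ℝ)) < t at h₁
  change t < min (((j : ℕ) : ℝ)) (((l : ℕ) : ℝ)) at h₂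
  change linearInterp n (edgeHeight n τ i j) t = linearInterp n (edgeHeight n τ k l) t at h
  obtain ⟨m, hm₁, hm₂, -, -, hneg⟩ := exists_mul_neg_of_linearInterp_eq_zero (N := n) (t := t)
    (by omega)
    (edgeHeight_sub_ne_zero hτ j.2 l.2 hne') (edgeHeight_sub_succ_ne_zero hτ j.2 l.2 hne')
    (by exact_mod_cast h₁) (by exact_mod_cast h₂) (by rw [linearInterp_sub, h, sub_self])
  have hadj' : (i : ℕ) = k ∨ (j : ℕ) = l := by
    rcases hadj with e | e | e | e
    · exact Or.inl (congrArg _ e)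
    · have := congrArg Fin.val e
      omega
    · have := congrArg Fin.val e
      omega
    · exact Or.inr (congrArg _ e)
  rcases edgeHeight_comparable hτ hij hkl j.2 l.2 hne' hadj' with H | H
  · have := mul_nonneg_of_nonpos_of_nonpos (sub_nonpos.2 (H m (by omega) (by omega)))
      (sub_nonpos.2 (H (m + 1) (by omega) (by omega)))
    linarith
  · have := mul_nonneg (sub_nonneg.2 (H m (by omega) (by omega)))
      (sub_nonneg.2 (H (m + 1) (by omega) (by omega)))
    linarith

theorem sig_ofAdmissible (hτ : AdmissibleBelow n τ) {i j k : Fin n} (hij : i < j) (hjk : j < k) :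
    (ofAdmissible hτ).sig i j k = τ i j k := by
  rw [Bool.eq_iff_iff, sig_eq_true_iff]
  change 0 < linearInterp n (edgeHeight n τ i k) ((j : ℕ) : ℝ) ↔ _
  rw [linearInterp_natCast j.2]
  exact edgeHeight_pos_iff hij hjk

end XMonotoneDrawing

/-- A signature function on `Fin n`, extended by `true` to all natural numbers. -/
def natSignature {n : ℕ} (σ : Fin n → Fin n → Fin n → Bool) (a b c : ℕ) : Bool :=
  if h : a < n ∧ b < n ∧ c < n then σ ⟨a, h.1⟩ ⟨b, h.2.1⟩ ⟨c, h.2.2⟩ else true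

theorem natSignature_coe {n : ℕ} (σ : Fin n → Fin n → Fin n → Bool) (a b c : Fin n) :
    natSignature σ a b c = σ a b c := by
  simp [natSignature]

theorem Sig.Admissible.admissibleBelow {n : ℕ} {σ : Fin n → Fin n → Fin n → Bool}
    (hσ : Sig.Admissible σ) : AdmissibleBelow n (natSignature σ) := by
  intro a b c d hab hbc hcd hd
  have h := hσ ⟨a, by omega⟩ ⟨b, by omega⟩ ⟨c, by omega⟩ ⟨d, hd⟩ hab hbc hcd
  rw [Sig.allowedForm_iff] at h
  simpa only [← natSignature_coe σ] using h

/-- A signature function `σ` on the triples of `[n]` is realizable by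
a semisimple x-monotone drawing of `K n` if and only if `σ` is admissible (every
increasing 4-tuple is of one of the ten allowed forms). -/
theorem semisimple_realizable_iff_admissible (n : ℕ)
    (σ : Fin n → Fin n → Fin n → Bool) :
    (∃ D : XMonotoneDrawing n, D.Semisimple ∧ D.Realizes σ) ↔ Sig.Admissible σ := by
  constructor
  · rintro ⟨D, hD, hσ⟩
    exact hD.admissible hσ
  · intro hσ
    refine ⟨.ofAdmissible hσ.admissibleBelow, XMonotoneDrawing.semisimple_ofAdmissible _, ?_⟩
    intro i j k hij hjk
    rw [XMonotoneDrawing.sig_ofAdmissible _ hij hjk, natSignature_coe]
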